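/- arXiv:1408.3502 — 4 statements merged into one kernel-verified Lean document; each statement's English description precedes it below -/
import Mathlib

section
/- Let D be a distance on X, let Q₁, …, Q_n ⊆ X (n ≥ 1), and for each i ∈ {1,…,n} let r_i : X → X be a map such that for every ω ∈ X: (i) r_i(ω) ∈ Q_i; (ii) Q_i satisfies the triangle equality for ω at r_i(ω), i.e. D φ (r_i(ω)) + D (r_i(ω)) ω = D φ ω for all φ ∈ Q_i; and (iii) for every j ∈ {1,…,n}, if ω ∈ Q_j then r_i(ω) ∈ Q_j (subprojection property). Given ψ ∈ X, define ρ₀ := ψ and ρ_k := r_k(ρ_{k−1}) for k = 1,…,n. Then Q₁ ∩ … ∩ Q_n satisfies the triangle equality for ψ at ρ_n, i.e. D φ ρ_n + D ρ_n ψ = D φ ψ for all φ ∈ Q₁ ∩ … ∩ Q_n; consequently, if D ρ_n ψ < ∞, then ρ_n is the unique minimiser of D(·,ψ) on Q₁ ∩ … ∩ Q_n. -/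
open ENNReal

/-!
The triangle equalities telescope. If `P` satisfies it for `ψ` at `ρ`, if `Q` satisfies it for `ρ`
at `σ`, and if `σ` is still in `P`, then for `φ ∈ P ∩ Q`
`D φ σ + D σ ψ = D φ σ + (D σ ρ + D ρ ψ) = D φ ρ + D ρ ψ = D φ ψ`,
where the first step is the equality of `P` applied to the point `σ` itself. The subprojection
property is what keeps each new iterate in the sets projected onto earlier.
-/

section

variable {X M : Type*}

/-- The triangle equality for `ψ` at `ρ ∈ Q` with respect to `D`: `ρ` plays the role of the entropic
projection of `ψ` onto `Q`. Membership of `ρ` in `Q` is part of the notion. -/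
structure TriangleEqualityAt [Add M] (D : X → X → M) (Q : Set X) (ψ ρ : X) : Prop where
  mem : ρ ∈ Q
  add_eq : ∀ φ ∈ Q, D φ ρ + D ρ ψ = D φ ψ

namespace TriangleEqualityAt

variable {D : X → X → M} {P Q : Set X} {φ ψ ρ σ : X}

theorem univ_self [AddZeroClass M] (hψ : D ψ ψ = 0) : TriangleEqualityAt D Set.univ ψ ψ where
  mem := Set.mem_univ ψ
  add_eq φ _ := by rw [hψ, add_zero]

theorem inter [AddSemigroup M] (hP : TriangleEqualityAt D P ψ ρ)
    (hQ : TriangleEqualityAt D Q ρ σ) (hσ : σ ∈ P) : TriangleEqualityAt D (P ∩ Q) ψ σ where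
  mem := ⟨hσ, hQ.mem⟩
  add_eq φ hφ := calc
    D φ σ + D σ ψ = D φ σ + (D σ ρ + D ρ ψ) := by rw [hP.add_eq σ hσ]
    _ = D φ ρ + D ρ ψ := by rw [← add_assoc, hQ.add_eq φ hφ.2]
    _ = D φ ψ := hP.add_eq φ hφ.1

theorem isMinOn [Add M] [Preorder M] [CanonicallyOrderedAdd M] (h : TriangleEqualityAt D Q ψ ρ) :
    IsMinOn (D · ψ) Q ρ :=
  isMinOn_iff.2 fun φ hφ ↦ le_add_self.trans_eq (h.add_eq φ hφ)

theorem eq_zero_of_eq [AddZeroClass M] (h : TriangleEqualityAt D Q ψ ρ)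
    (hreg : IsAddRightRegular (D ρ ψ)) (hφ : φ ∈ Q) (heq : D φ ψ = D ρ ψ) : D φ ρ = 0 :=
  hreg <| show D φ ρ + D ρ ψ = 0 + D ρ ψ by rw [h.add_eq φ hφ, heq, zero_add]

theorem biInter_Icc [AddMonoid M] {Q : ℕ → Set X} {ρ : ℕ → X} {n : ℕ} (h₀ : D (ρ 0) (ρ 0) = 0)
    (htri : ∀ k < n, TriangleEqualityAt D (Q (k + 1)) (ρ k) (ρ (k + 1)))
    (hsub : ∀ k < n, ∀ j ∈ Set.Icc 1 k, ρ k ∈ Q j → ρ (k + 1) ∈ Q j) :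
    TriangleEqualityAt D (⋂ i ∈ Set.Icc 1 n, Q i) (ρ 0) (ρ n) := by
  induction n with
  | zero => simpa using univ_self h₀
  | succ n ih =>
    have hprev : TriangleEqualityAt D (⋂ i ∈ Set.Icc 1 n, Q i) (ρ 0) (ρ n) :=
      ih (fun k hk ↦ htri k (hk.trans n.lt_succ_self)) fun k hk ↦ hsub k (hk.trans n.lt_succ_self)
    have hmem : ρ (n + 1) ∈ ⋂ i ∈ Set.Icc 1 n, Q i :=
      Set.mem_iInter₂.2 fun j hj ↦ hsub n n.lt_succ_self j hj (Set.mem_iInter₂.1 hprev.mem j hj)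
    rw [← Set.insert_Icc_right_eq_Icc_add_one (by lia), Set.biInter_insert, Set.inter_comm]
    exact hprev.inter (htri n n.lt_succ_self) hmem

end TriangleEqualityAt

theorem iterated_entropic_projection_general [AddMonoid M] [Preorder M] [CanonicallyOrderedAdd M]
    {D : X → X → M} (hD : ∀ x y, D x y = 0 ↔ x = y) {n : ℕ} {Q : ℕ → Set X} {ρ : ℕ → X}
    (htri : ∀ k < n, TriangleEqualityAt D (Q (k + 1)) (ρ k) (ρ (k + 1)))
    (hsub : ∀ k < n, ∀ j ∈ Set.Icc 1 k, ρ k ∈ Q j → ρ (k + 1) ∈ Q j) :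
    TriangleEqualityAt D {φ | ∀ i, 1 ≤ i → i ≤ n → φ ∈ Q i} (ρ 0) (ρ n) ∧
    IsMinOn (D · (ρ 0)) {φ | ∀ i, 1 ≤ i → i ≤ n → φ ∈ Q i} (ρ n) ∧
    (IsAddRightRegular (D (ρ n) (ρ 0)) → ∀ φ, (∀ i, 1 ≤ i → i ≤ n → φ ∈ Q i) →
      D φ (ρ 0) = D (ρ n) (ρ 0) → φ = ρ n) := by
  have hInter : ⋂ i ∈ Set.Icc 1 n, Q i = {φ | ∀ i, 1 ≤ i → i ≤ n → φ ∈ Q i} := by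
    ext φ
    simp only [Set.mem_iInter, Set.mem_Icc, and_imp, Set.mem_ofPred_eq]
  have h := hInter ▸ TriangleEqualityAt.biInter_Icc ((hD _ _).2 rfl) htri hsub
  exact ⟨h, h.isMinOn, fun hreg _ hφ heq ↦ (hD _ _).1 (h.eq_zero_of_eq hreg hφ heq)⟩

end

/-- Iterated entropic projections.  Let `Q 1, …, Q n` be subsets of `X` (`n ≥ 1`),
and for each `i ∈ {1,…,n}` let `r i : X → X` be a map such that for every `ω`: `r i ω ∈ Q i`;
`Q i` satisfies the triangle equality for `ω` at `r i ω`; and `r i` preserves membership in each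
`Q j` (`j ∈ {1,…,n}`, subprojection property).  Define `ρ 0 = ψ` and `ρ k = r k (ρ (k-1))`.
Then `Q 1 ∩ … ∩ Q n` satisfies the triangle equality for `ψ` at `ρ n`; consequently, if
`D (ρ n) ψ < ∞`, then `ρ n` is the unique minimiser of `D (·, ψ)` on `Q 1 ∩ … ∩ Q n`. -/
theorem iterated_entropic_projection {X : Type*} (D : X → X → ℝ≥0∞)
    (hD : ∀ x y, D x y = 0 ↔ x = y)
    (n : ℕ) (hn : 1 ≤ n)
    (Q : ℕ → Set X) (r : ℕ → X → X)
    (hmem : ∀ i, 1 ≤ i → i ≤ n → ∀ ω, r i ω ∈ Q i)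
    (htri : ∀ i, 1 ≤ i → i ≤ n → ∀ ω, ∀ φ ∈ Q i, D φ (r i ω) + D (r i ω) ω = D φ ω)
    (hsub : ∀ i, 1 ≤ i → i ≤ n → ∀ j, 1 ≤ j → j ≤ n → ∀ ω ∈ Q j, r i ω ∈ Q j)
    (ψ : X) (ρ : ℕ → X)
    (hρ0 : ρ 0 = ψ)
    (hρ : ∀ k, 1 ≤ k → k ≤ n → ρ k = r k (ρ (k - 1))) :
    (∀ i, 1 ≤ i → i ≤ n → ρ n ∈ Q i) ∧
    (∀ φ, (∀ i, 1 ≤ i → i ≤ n → φ ∈ Q i) → D φ (ρ n) + D (ρ n) ψ = D φ ψ) ∧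
    (D (ρ n) ψ < ⊤ →
      ∀ φ, (∀ i, 1 ≤ i → i ≤ n → φ ∈ Q i) →
        D (ρ n) ψ ≤ D φ ψ ∧ (D φ ψ = D (ρ n) ψ → φ = ρ n)) := by
  subst hρ0
  obtain ⟨h, hmin, huniq⟩ := iterated_entropic_projection_general hD
    (fun k hk ↦ hρ (k + 1) k.succ_pos hk ▸ ⟨hmem _ k.succ_pos hk _, htri _ k.succ_pos hk _⟩)
    (fun k hk j hj ↦ hρ (k + 1) k.succ_pos hk ▸ hsub _ k.succ_pos hk j hj.1 (hj.2.trans hk.le) _)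
  exact ⟨h.mem, h.add_eq, fun hfin φ hφ ↦
    ⟨hmin hφ, huniq (fun _ _ ↦ (ENNReal.add_left_inj hfin.ne).1) φ hφ⟩⟩
end

section
/- Let P ∈ M_d(ℂ) be a projection, let ψ be a positive definite density matrix, set ρ := P·ψ·P + (1−P)·ψ·(1−P) (which is again a positive definite density matrix), and let φ be any positive definite density matrix commuting with P (φ·P = P·φ). Then the Pythagorean (triangle) equality D₀(φ,ψ) = D₀(φ,ρ) + D₀(ρ,ψ) holds. -/
open Matrix
open scoped ComplexOrder

/-- Matrix logarithm: the real logarithm applied via the continuous functional calculus. -/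
noncomputable def matLog {d : ℕ} (A : Matrix (Fin d) (Fin d) ℂ) : Matrix (Fin d) (Fin d) ℂ :=
  cfc Real.log A

/-- The Umegaki distance `D₀(φ,ψ) := Re (tr (ψ · (log ψ − log φ)))`. -/
noncomputable def umegakiD0 {d : ℕ} (φ ψ : Matrix (Fin d) (Fin d) ℂ) : ℝ :=
  (Matrix.trace (ψ * (matLog ψ - matLog φ))).re

/-!
The pinching `ρ = ∑ i, pᵢ ψ pᵢ` is the trace-preserving conditional expectation of `ψ` onto the
commutant of the `pᵢ`: it lies in that commutant, and `ψ` and `ρ` have the same trace against each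
of its elements. Since `log ρ` and `log φ` belong to the commutant,
`tr (ρ (log ρ - log φ)) = tr (ψ (log ρ - log φ))`, and the equality telescopes.
-/

section Pinching

variable {ι A : Type*} [Fintype ι] {p : ι → A}

/-- The pinching `∑ i, p i * x * p i` of `x` by a finite family `p`. For `p` a complete family of
orthogonal projections this is the Lüders projection of `x`; the single projection `P` of the
theorem is encoded as the family `![P, 1 - P]`. -/
def pinching [NonUnitalNonAssocSemiring A] (p : ι → A) (x : A) : A :=
  ∑ i, p i * x * p i

theorem pinching_pair [NonUnitalNonAssocSemiring A] (a b x : A) :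
    pinching ![a, b] x = a * x * a + b * x * b := by
  simp [pinching]

theorem pinching_mul [Semiring A] (hp : OrthogonalIdempotents p) (x : A) (j : ι) :
    pinching p x * p j = p j * x * p j := by
  classical
  simp [pinching, Finset.sum_mul, mul_assoc, hp.mul_eq]

theorem mul_pinching [Semiring A] (hp : OrthogonalIdempotents p) (x : A) (j : ι) :
    p j * pinching p x = p j * x * p j := by
  classical
  simp [pinching, Finset.mul_sum, ← mul_assoc, hp.mul_eq]

theorem commute_pinching [Semiring A] (hp : OrthogonalIdempotents p) (x : A) (j : ι) :
    Commute (pinching p x) (p j) :=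
  (pinching_mul hp x j).trans (mul_pinching hp x j).symm

theorem map_pinching_mul_of_commute [Semiring A] {M : Type*} [AddCommMonoid M] (τ : A →+ M)
    (hτ : ∀ a b, τ (a * b) = τ (b * a)) (hp : CompleteOrthogonalIdempotents p) (x : A) {y : A}
    (hy : ∀ i, Commute y (p i)) :
    τ (pinching p x * y) = τ (x * y) := by
  have block (i : ι) : τ (p i * x * p i * y) = τ (x * y * p i) := by
    calc
      τ (p i * x * p i * y) = τ (p i * (x * (p i * y))) := by simp only [mul_assoc]
      _ = τ (x * (p i * y) * p i) := hτ _ _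
      _ = τ (x * y * (p i * p i)) := by rw [← (hy i).eq]; simp only [mul_assoc]
      _ = τ (x * y * p i) := by rw [(hp.idem i).eq]
  calc
    τ (pinching p x * y) = ∑ i, τ (p i * x * p i * y) := by
      rw [pinching, Finset.sum_mul, map_sum]
    _ = ∑ i, τ (x * y * p i) := Finset.sum_congr rfl fun i _ ↦ block i
    _ = τ (x * y) := by rw [← map_sum, ← Finset.mul_sum, hp.complete, mul_one]

/-- `L` plays the role of the logarithm. -/
theorem pythagorean_equality_single_projection_general [Ring A] {M : Type*} [AddCommGroup M]
    (τ : A →+ M) (hτ : ∀ a b, τ (a * b) = τ (b * a))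
    (L : A → A) (hL : ∀ a b, Commute a b → Commute (L a) b)
    (hp : CompleteOrthogonalIdempotents p) (ψ : A) {φ : A} (hφ : ∀ i, Commute φ (p i)) :
    τ (ψ * (L ψ - L φ)) =
      τ (pinching p ψ * (L (pinching p ψ) - L φ)) + τ (ψ * (L ψ - L (pinching p ψ))) := by
  have hcomm (i : ι) : Commute (L (pinching p ψ) - L φ) (p i) :=
    (hL _ _ (commute_pinching hp.toOrthogonalIdempotents ψ i)).sub_left (hL _ _ (hφ i))
  rw [map_pinching_mul_of_commute τ hτ hp ψ hcomm, ← map_add, ← mul_add, add_comm,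
    sub_add_sub_cancel]

end Pinching

theorem commute_matLog {d : ℕ} {A B : Matrix (Fin d) (Fin d) ℂ} (h : Commute A B) :
    Commute (matLog A) B :=
  h.cfc_real Real.log

/-- Pythagorean (triangle) equality for the weak Lüders projection associated to a
single projection `P`: with `ρ := P ψ P + (1−P) ψ (1−P)`, for every positive definite density
matrix `φ` commuting with `P` one has `D₀(φ,ψ) = D₀(φ,ρ) + D₀(ρ,ψ)`. -/
theorem pythagorean_equality_single_projection {d : ℕ} (hd : 1 ≤ d)
    (P ψ φ : Matrix (Fin d) (Fin d) ℂ)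
    (hP : Pᴴ = P) (hP2 : P * P = P)
    (hψ : ψ.PosDef) (hψ1 : ψ.trace = 1)
    (hφ : φ.PosDef) (hφ1 : φ.trace = 1)
    (hφP : φ * P = P * φ) :
    umegakiD0 φ ψ =
      umegakiD0 φ (P * ψ * P + (1 - P) * ψ * (1 - P)) +
        umegakiD0 (P * ψ * P + (1 - P) * ψ * (1 - P)) ψ := by
  have hφQ : Commute φ (1 - P) := (Commute.one_right φ).sub_right hφP
  rw [← pinching_pair]
  exact pythagorean_equality_single_projection_general
    (Complex.reAddGroupHom.comp (traceAddMonoidHom (Fin d) ℂ))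
    (fun a b ↦ congrArg Complex.re (trace_mul_comm a b)) matLog (fun _ _ ↦ commute_matLog)
    (.of_isIdempotentElem hP2) ψ (Fin.forall_fin_two.mpr ⟨hφP, hφQ⟩)
end

section
/- Let ρ and ρ_new be density matrices in M_d(ℂ), let {P_1,…,P_n} be projections with P_i·P_j = δ_ij·P_i for all i,j and P_1 + … + P_n = 1, and assume tr(ρ·P_i) ≠ 0, tr(ρ_new·P_i) ≠ 0, and ρ_new·P_i = P_i·ρ_new for all i. Then ρ_new = Σ_{i=1}^n tr(ρ_new·P_i)·(P_i·ρ·P_i)/tr(ρ·P_i) if and only if for every projection P ∈ M_d(ℂ) commuting with every P_i one has tr(ρ_new·P_i·P)·tr(ρ·P_i) = tr(ρ·P_i·P)·tr(ρ_new·P_i) for all i ∈ {1,…,n}. -/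
open Matrix
open scoped ComplexOrder

/-!
Put `X_i = tr(ρ P_i) ρ_new - tr(ρ_new P_i) ρ`. Multiplied by `P_i` on the right, Jeffrey's formula
becomes `P_i X_i P_i = 0`, while the trace identities say `tr(X_i P_i Q) = 0`. The projections
commuting with every `P_j` include those onto the lines `ℂ v` with `v` in the range of `P_i`; for
these, `tr(X_i P_i Q)` is up to normalisation the quadratic form `⟨v, X_i v⟩`, and over `ℂ` a matrix
is determined by its quadratic form.
-/

section Idempotents

variable {R ι : Type*} [Semiring R] {e : ι → R}

theorem eq_sum_mul_idempotent_iff [Fintype ι] (he : CompleteOrthogonalIdempotents e)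
    (x : R) (y : ι → R) : x = ∑ i, y i * e i ↔ ∀ i, x * e i = y i * e i := by
  classical
  constructor
  · rintro rfl i
    simp only [Finset.sum_mul, mul_assoc, he.mul_eq, mul_ite, mul_zero, Finset.sum_ite_eq',
      Finset.mem_univ, if_true]
  · intro h
    rw [← Finset.sum_congr rfl fun i _ => h i, ← Finset.mul_sum, he.complete, mul_one]

theorem commute_idempotent_of_mul_eq_self (he : OrthogonalIdempotents e) {i : ι} {q : R}
    (hleft : e i * q = q) (hright : q * e i = q) (j : ι) : Commute q (e j) := by
  change q * e j = e j * q
  obtain rfl | hij := eq_or_ne i j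
  · rw [hleft, hright]
  · rw [← hright, mul_assoc, he.ortho hij, mul_zero, hright, ← hleft, ← mul_assoc,
      he.ortho hij.symm, zero_mul]

end Idempotents

theorem trace_compression_mul_of_commute {m R : Type*} [Fintype m] [CommSemiring R]
    {p q : Matrix m m R} (hp : IsIdempotentElem p) (hqp : Commute q p) (X : Matrix m m R) :
    trace (p * X * p * q) = trace (X * p * q) :=
  calc trace (p * X * p * q) = trace (X * p * q * p) := by
        simp only [mul_assoc, trace_mul_comm p]
    _ = trace (X * (p * p) * q) := by simp only [mul_assoc, hqp.eq]
    _ = trace (X * p * q) := by rw [hp.eq]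

section LineProjection

variable {m K : Type*} [Fintype m] [Field K] [StarRing K]

/-- The orthogonal projection onto the line spanned by `v`. It is `0` when `star v ⬝ᵥ v = 0`, by the
convention `0⁻¹ = 0`. -/
def lineProjection (v : m → K) : Matrix m m K :=
  (star v ⬝ᵥ v)⁻¹ • vecMulVec v (star v)

theorem isStarProjection_lineProjection (v : m → K) : IsStarProjection (lineProjection v) where
  isIdempotentElem := by
    rw [IsIdempotentElem, lineProjection, smul_mul_smul_comm, vecMulVec_mul_vecMulVec,
      vecMulVec_smul, smul_smul]
    congr 1
    simpa only [inv_inv] using mul_self_mul_inv (star v ⬝ᵥ v)⁻¹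
  isSelfAdjoint := by
    have hself : star (star v ⬝ᵥ v) = star v ⬝ᵥ v := (star_dotProduct v v).symm
    rw [IsSelfAdjoint, star_eq_conjTranspose, lineProjection, conjTranspose_smul,
      conjTranspose_vecMulVec, star_star, star_inv₀, hself]

theorem mul_lineProjection_of_mulVec_eq {A : Matrix m m K} {v : m → K} (h : A *ᵥ v = v) :
    A * lineProjection v = lineProjection v := by
  rw [lineProjection, mul_smul_comm, mul_vecMulVec, h]

theorem trace_mul_lineProjection (A : Matrix m m K) (v : m → K) :
    trace (A * lineProjection v) = (star v ⬝ᵥ v)⁻¹ * (star v ⬝ᵥ A *ᵥ v) := by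
  rw [lineProjection, mul_smul_comm, trace_smul, smul_eq_mul, mul_vecMulVec, trace_vecMulVec,
    dotProduct_comm (A *ᵥ v)]

end LineProjection

theorem star_dotProduct_conjTranspose_mul_mul_mulVec {m n R : Type*} [Fintype m] [Fintype n]
    [NonUnitalSemiring R] [StarRing R] (A : Matrix m m R) (B : Matrix m n R) (w : n → R) :
    star w ⬝ᵥ (Bᴴ * A * B) *ᵥ w = star (B *ᵥ w) ⬝ᵥ A *ᵥ (B *ᵥ w) := by
  simp only [star_mulVec, ← dotProduct_mulVec, mulVec_mulVec, Matrix.mul_assoc]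

section Complex

variable {m : Type*} [Fintype m]

theorem eq_zero_of_forall_star_dotProduct_mulVec_eq_zero {X : Matrix m m ℂ}
    (h : ∀ w : m → ℂ, star w ⬝ᵥ X *ᵥ w = 0) : X = 0 := by
  classical
  rw [← (toEuclideanLin (𝕜 := ℂ)).map_eq_zero_iff, ← inner_map_self_eq_zero]
  intro x
  rw [← inner_conj_symm, EuclideanSpace.inner_eq_star_dotProduct, dotProduct_comm, toLpLin_apply,
    h, map_zero]

theorem compression_eq_zero_of_forall_trace_mul_eq_zero {p X : Matrix m m ℂ}
    (hp : IsStarProjection p)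
    (h : ∀ Q, IsStarProjection Q → p * Q = Q → trace (X * Q) = 0) : p * X * p = 0 := by
  refine eq_zero_of_forall_star_dotProduct_mulVec_eq_zero fun w => ?_
  have hquad : star w ⬝ᵥ (p * X * p) *ᵥ w = star (p *ᵥ w) ⬝ᵥ X *ᵥ (p *ᵥ w) := by
    simpa only [← star_eq_conjTranspose, hp.isSelfAdjoint.star_eq]
      using star_dotProduct_conjTranspose_mul_mul_mulVec X p w
  have hfix : p *ᵥ (p *ᵥ w) = p *ᵥ w := by rw [mulVec_mulVec, hp.isIdempotentElem.eq]
  have htrace := h _ (isStarProjection_lineProjection _) (mul_lineProjection_of_mulVec_eq hfix)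
  rw [trace_mul_lineProjection, mul_eq_zero, inv_eq_zero, dotProduct_star_self_eq_zero] at htrace
  rw [hquad]
  obtain hzero | hform := htrace
  · rw [hzero, mulVec_zero, dotProduct_zero]
  · exact hform

variable {ι : Type*} {P : ι → Matrix m m ℂ}

theorem compression_eq_zero_iff_forall_commute_trace_eq_zero [DecidableEq m]
    (hP : OrthogonalIdempotents P) (hPsa : ∀ i, IsSelfAdjoint (P i)) (i : ι) (X : Matrix m m ℂ) :
    P i * X * P i = 0 ↔
      ∀ Q, IsStarProjection Q → (∀ j, Commute Q (P j)) → trace (X * P i * Q) = 0 := by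
  constructor
  · intro hX Q _ hQP
    rw [← trace_compression_mul_of_commute (hP.idem i) (hQP i), hX, zero_mul, trace_zero]
  · intro h
    refine compression_eq_zero_of_forall_trace_mul_eq_zero ⟨hP.idem i, hPsa i⟩ fun Q hQ hPQ => ?_
    have hQP : Q * P i = Q := by
      simpa only [star_mul, hQ.isSelfAdjoint.star_eq, (hPsa i).star_eq] using congrArg star hPQ
    simpa only [mul_assoc, hPQ] using h Q hQ (commute_idempotent_of_mul_eq_self hP hPQ hQP)

theorem quantum_jeffrey_characterisation_general [DecidableEq m] [Fintype ι]
    (hP : CompleteOrthogonalIdempotents P) (hPsa : ∀ i, IsSelfAdjoint (P i))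
    {ρ ρnew : Matrix m m ℂ} (hρP : ∀ i, trace (ρ * P i) ≠ 0) (hcomm : ∀ i, Commute ρnew (P i)) :
    ρnew = ∑ i, (trace (ρnew * P i) / trace (ρ * P i)) • (P i * ρ * P i) ↔
      ∀ Q, IsStarProjection Q → (∀ i, Commute Q (P i)) →
        ∀ i, trace (ρnew * P i * Q) * trace (ρ * P i) =
          trace (ρ * P i * Q) * trace (ρnew * P i) := by
  let X i := trace (ρ * P i) • ρnew - trace (ρnew * P i) • ρ
  have hblock i : P i * X i * P i = trace (ρ * P i) • (ρnew * P i)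
      - trace (ρnew * P i) • (P i * ρ * P i) := by
    simp only [X, mul_sub, sub_mul, mul_smul_comm, smul_mul_assoc, ← (hcomm i).eq, mul_assoc,
      (hP.idem i).eq]
  have htrace i Q : trace (X i * P i * Q) = trace (ρnew * P i * Q) * trace (ρ * P i)
      - trace (ρ * P i * Q) * trace (ρnew * P i) := by
    simp only [X, sub_mul, smul_mul_assoc, trace_sub, trace_smul, smul_eq_mul, mul_comm]
  calc ρnew = ∑ i, (trace (ρnew * P i) / trace (ρ * P i)) • (P i * ρ * P i)
      ↔ ∀ i, ρnew * P i = (trace (ρnew * P i) / trace (ρ * P i)) • (P i * ρ * P i) := by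
        simpa only [smul_mul_assoc] using eq_sum_mul_idempotent_iff hP ρnew
          fun i => (trace (ρnew * P i) / trace (ρ * P i)) • (P i * ρ)
    _ ↔ ∀ i, P i * X i * P i = 0 := forall_congr' fun i => by
        rw [hblock, sub_eq_zero, div_eq_inv_mul, mul_smul, eq_inv_smul_iff₀ (hρP i)]
    _ ↔ ∀ i Q, IsStarProjection Q → (∀ j, Commute Q (P j)) → trace (X i * P i * Q) = 0 :=
        forall_congr' fun i => compression_eq_zero_iff_forall_commute_trace_eq_zero
          hP.toOrthogonalIdempotents hPsa i (X i)
    _ ↔ _ := by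
        simp only [htrace, sub_eq_zero]
        exact ⟨fun h Q hQ hQP i => h i Q hQ hQP, fun h i Q hQ hQP => h Q hQ hQP i⟩

end Complex

/-- characterisation of the quantum Jeffrey rule.  For density matrices `ρ`, `ρnew`
and mutually orthogonal projections `P 1, …, P n` summing to `1`, with `tr(ρ P i) ≠ 0`,
`tr(ρnew P i) ≠ 0` and `ρnew` commuting with every `P i`, one has
`ρnew = ∑ i, (tr(ρnew P i)/tr(ρ P i)) • (P i ρ P i)` iff for every projection `P` commuting with
every `P i`, `tr(ρnew P i P) tr(ρ P i) = tr(ρ P i P) tr(ρnew P i)` for all `i`. -/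
theorem quantum_jeffrey_characterisation {d n : ℕ} (hd : 1 ≤ d)
    (P : Fin n → Matrix (Fin d) (Fin d) ℂ)
    (hPH : ∀ i, (P i)ᴴ = P i)
    (horth : ∀ i j, P i * P j = if i = j then P i else 0)
    (hsum : ∑ i, P i = 1)
    (ρ ρnew : Matrix (Fin d) (Fin d) ℂ)
    (hρ : ρ.PosSemidef) (hρ1 : ρ.trace = 1)
    (hρnew : ρnew.PosSemidef) (hρnew1 : ρnew.trace = 1)
    (hρP : ∀ i, Matrix.trace (ρ * P i) ≠ 0)
    (hρnewP : ∀ i, Matrix.trace (ρnew * P i) ≠ 0)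
    (hcomm : ∀ i, ρnew * P i = P i * ρnew) :
    ρnew = ∑ i, (Matrix.trace (ρnew * P i) / Matrix.trace (ρ * P i)) • (P i * ρ * P i) ↔
      ∀ Q : Matrix (Fin d) (Fin d) ℂ, Qᴴ = Q → Q * Q = Q → (∀ i, Q * P i = P i * Q) →
        ∀ i, Matrix.trace (ρnew * P i * Q) * Matrix.trace (ρ * P i) =
          Matrix.trace (ρ * P i * Q) * Matrix.trace (ρnew * P i) :=
  (quantum_jeffrey_characterisation_general ⟨OrthogonalIdempotents.iff_mul_eq.2 horth, hsum⟩
    hPH hρP hcomm).trans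
    ⟨fun h Q hQH hQQ => h Q ⟨hQQ, hQH⟩, fun h Q hQ => h Q hQ.isSelfAdjoint hQ.isIdempotentElem⟩
end

section
/- (Quantum Jeffrey's rule as entropic projection.) Let {P_1,…,P_n} ⊆ M_d(ℂ) be nonzero projections with P_i·P_j = δ_ij·P_i for all i,j and P_1 + … + P_n = 1, let ψ be a positive definite density matrix (so Re tr(ψ·P_i) > 0 for each i), and let λ_1,…,λ_n be real numbers with λ_i > 0 and Σ_i λ_i = 1. Let Q := { ω : ω is a positive definite density matrix, ω·P_i = P_i·ω for all i, and Re tr(ω·P_i) = λ_i for all i }. Set ρ := Σ_{i=1}^n λ_i·(P_i·ψ·P_i)/(Re tr(ψ·P_i)). Then ρ ∈ Q, and ρ is the unique minimiser of D₀(·,ψ) on Q: for every φ ∈ Q, D₀(ρ,ψ) ≤ D₀(φ,ψ), with equality if and only if φ = ρ. -/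
open Matrix
open scoped ComplexOrder

/-!
Write `E_c x = ∑ i, c i • P i x P i`, so that `ρ = E_c ψ` with `c i = l i / Re tr (ψ P i)`. On
matrices commuting with all the `P i`, `log (E_c x) = log (E_c 1) + log x` and
`tr (E_1 ψ * x) = tr (ψ * x)`, which gives the Pythagorean identity
`D(φ, ψ) = D(ρ, ψ) + D(E_{c⁻¹} φ, E_1 ψ)`. For `φ ∈ Q` the last two matrices have equal trace, so
by Klein's inequality the last term is nonnegative and vanishes only if `E_{c⁻¹} φ = E_1 ψ`,
that is, only if `φ = ρ`.
-/

section Klein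

open InformationTheory

variable {m 𝕜 : Type*} [Fintype m] [DecidableEq m] [RCLike 𝕜] {A B : Matrix m m 𝕜}

/-- The squared modulus `|⟨u j, v k⟩|²` of the inner products between the eigenvector bases of two
Hermitian matrices. -/
noncomputable def eigenOverlap (hA : A.IsHermitian) (hB : B.IsHermitian) (j k : m) : ℝ :=
  ‖(star (hA.eigenvectorUnitary : Matrix m m 𝕜) * hB.eigenvectorUnitary) j k‖ ^ 2

theorem eigenOverlap_nonneg (hA : A.IsHermitian) (hB : B.IsHermitian) (j k : m) :
    0 ≤ eigenOverlap hA hB j k :=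
  sq_nonneg _

theorem trace_diagonal_mul_mul_diagonal_mul_conjTranspose (a b : m → ℝ) (W : Matrix m m 𝕜) :
    trace (diagonal (RCLike.ofReal ∘ a) * W * diagonal (RCLike.ofReal ∘ b) * Wᴴ) =
      ((∑ j, ∑ k, a j * b k * ‖W j k‖ ^ 2 : ℝ) : 𝕜) := by
  simp only [trace, diag, mul_apply (N := Wᴴ), mul_diagonal, diagonal_mul, conjTranspose_apply,
    RCLike.ofReal_sum]
  refine Finset.sum_congr rfl fun j _ => Finset.sum_congr rfl fun k _ => ?_
  rw [RCLike.ofReal_mul, RCLike.ofReal_mul, RCLike.ofReal_pow, ← RCLike.mul_conj]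
  simp only [Function.comp_apply, RCLike.star_def]
  ring

theorem trace_cfc_mul_cfc (hA : A.IsHermitian) (hB : B.IsHermitian) (f g : ℝ → ℝ) :
    trace (cfc f A * cfc g B) = ((∑ j, ∑ k,
      f (hA.eigenvalues j) * g (hB.eigenvalues k) * eigenOverlap hA hB j k : ℝ) : 𝕜) := by
  set U := (hA.eigenvectorUnitary : Matrix m m 𝕜)
  set V := (hB.eigenvectorUnitary : Matrix m m 𝕜)
  set F : Matrix m m 𝕜 := diagonal (RCLike.ofReal ∘ f ∘ hA.eigenvalues)
  set G : Matrix m m 𝕜 := diagonal (RCLike.ofReal ∘ g ∘ hB.eigenvalues)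
  calc trace (cfc f A * cfc g B)
      = trace (U * F * star U * (V * G * star V)) := by
        rw [hA.cfc_eq, hB.cfc_eq]; rfl
    _ = trace (F * (star U * V) * G * (star U * V)ᴴ) := by
        rw [Matrix.mul_assoc U, Matrix.mul_assoc U, trace_mul_comm U]
        simp only [conjTranspose_mul, star_eq_conjTranspose, conjTranspose_conjTranspose,
          Matrix.mul_assoc]
    _ = _ := trace_diagonal_mul_mul_diagonal_mul_conjTranspose _ _ _

theorem trace_sub_mul_sub_eq (hA : A.IsHermitian) (hB : B.IsHermitian) :
    trace ((A - B) * (A - B)) = ((∑ j, ∑ k,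
      (hA.eigenvalues j - hB.eigenvalues k) ^ 2 * eigenOverlap hA hB j k : ℝ) : 𝕜) := by
  have hAA := trace_cfc_mul_cfc hA hB (fun x => x * x) 1
  have hAB := trace_cfc_mul_cfc hA hB id id
  have hBB := trace_cfc_mul_cfc hA hB 1 (fun x => x * x)
  rw [cfc_mul (fun x => x) (fun x => x) A, cfc_id' ℝ A, cfc_one ℝ B, mul_one] at hAA
  rw [cfc_id ℝ A, cfc_id ℝ B] at hAB
  rw [cfc_mul (fun x => x) (fun x => x) B, cfc_id' ℝ B, cfc_one ℝ A, one_mul] at hBB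
  calc trace ((A - B) * (A - B))
      = trace (A * A) - 2 * trace (A * B) + trace (B * B) := by
        simp only [Matrix.sub_mul, Matrix.mul_sub, trace_sub, trace_mul_comm B A]
        ring
    _ = _ := by
        rw [hAA, hAB, hBB]
        norm_cast
        simp only [Finset.mul_sum, ← Finset.sum_sub_distrib, ← Finset.sum_add_distrib, Pi.one_apply,
          id]
        exact Finset.sum_congr rfl fun j _ => Finset.sum_congr rfl fun k _ => by ring

theorem eq_of_eigenvalues_eq_of_eigenOverlap_ne_zero (hA : A.IsHermitian) (hB : B.IsHermitian)
    (h : ∀ j k, eigenOverlap hA hB j k ≠ 0 → hA.eigenvalues j = hB.eigenvalues k) : A = B := by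
  have hzero : trace ((A - B)ᴴ * (A - B)) = 0 := by
    rw [(hA.sub hB).eq, trace_sub_mul_sub_eq hA hB, RCLike.ofReal_eq_zero]
    refine Finset.sum_eq_zero fun j _ => Finset.sum_eq_zero fun k _ => ?_
    by_cases hjk : eigenOverlap hA hB j k = 0
    · rw [hjk, mul_zero]
    · rw [h j k hjk, sub_self]; ring
  exact sub_eq_zero.1 (trace_conjTranspose_mul_self_eq_zero_iff.1 hzero)

/-- Umegaki's relative entropy, with the reference state `φ` as first argument. -/
noncomputable def umegakiDist (φ ψ : Matrix m m 𝕜) : ℝ :=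
  RCLike.re (trace (ψ * (cfc Real.log ψ - cfc Real.log φ)))

theorem mul_klFun_div {x y : ℝ} (hy : y ≠ 0) :
    y * klFun (x / y) = x * Real.log x - x * Real.log y + y - x := by
  rcases eq_or_ne x 0 with rfl | hx
  · simp [klFun_zero]
  · rw [klFun_apply, Real.log_div hx hy]
    field_simp

theorem umegakiDist_eq_re_trace_sub_add_sum (hA : A.IsHermitian) (hB : B.PosDef) :
    umegakiDist B A = RCLike.re (trace A) - RCLike.re (trace B) +
      ∑ j, ∑ k, hB.1.eigenvalues k * klFun (hA.eigenvalues j / hB.1.eigenvalues k) *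
        eigenOverlap hA hB.1 j k := by
  have hBsa : IsSelfAdjoint B := hB.1
  have hAlogA := trace_cfc_mul_cfc hA hB.1 (fun x => x * Real.log x) 1
  have hAlogB := trace_cfc_mul_cfc hA hB.1 id Real.log
  have hA1 := trace_cfc_mul_cfc hA hB.1 id 1
  have h1B := trace_cfc_mul_cfc hA hB.1 1 id
  have hcont : ContinuousOn Real.log (spectrum ℝ A) :=
    (finite_real_spectrum (A := A)).continuousOn _
  rw [cfc_mul (fun x => x) Real.log A, cfc_id' ℝ A, cfc_one ℝ B, mul_one] at hAlogA
  rw [cfc_id ℝ A] at hAlogB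
  rw [cfc_id ℝ A, cfc_one ℝ B, mul_one] at hA1
  rw [cfc_id ℝ B, cfc_one ℝ A, one_mul] at h1B
  simp only [umegakiDist, Matrix.mul_sub, trace_sub, map_sub, hAlogA, hAlogB, hA1, h1B,
    RCLike.ofReal_re, ← Finset.sum_sub_distrib, ← Finset.sum_add_distrib, Pi.one_apply, id]
  refine Finset.sum_congr rfl fun j _ => Finset.sum_congr rfl fun k _ => ?_
  rw [mul_klFun_div (hB.eigenvalues_pos k).ne']
  ring

theorem mul_klFun_div_mul_eigenOverlap_nonneg (hA : A.PosSemidef) (hB : B.PosDef) (j k : m) :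
    0 ≤ hB.1.eigenvalues k * klFun (hA.1.eigenvalues j / hB.1.eigenvalues k) *
      eigenOverlap hA.1 hB.1 j k :=
  mul_nonneg (mul_nonneg (hB.eigenvalues_pos k).le (klFun_nonneg
    (div_nonneg (hA.eigenvalues_nonneg j) (hB.eigenvalues_pos k).le))) (eigenOverlap_nonneg ..)

theorem re_trace_sub_re_trace_le_umegakiDist (hA : A.PosSemidef) (hB : B.PosDef) :
    RCLike.re (trace A) - RCLike.re (trace B) ≤ umegakiDist B A := by
  rw [umegakiDist_eq_re_trace_sub_add_sum hA.1 hB]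
  exact le_add_of_nonneg_right <| Finset.sum_nonneg fun j _ => Finset.sum_nonneg fun k _ =>
    mul_klFun_div_mul_eigenOverlap_nonneg hA hB j k

theorem umegakiDist_eq_re_trace_sub_re_trace_iff (hA : A.PosSemidef) (hB : B.PosDef) :
    umegakiDist B A = RCLike.re (trace A) - RCLike.re (trace B) ↔ A = B := by
  refine ⟨fun h => ?_, fun h => by simp [umegakiDist, h]⟩
  have hnonneg := mul_klFun_div_mul_eigenOverlap_nonneg hA hB
  rw [umegakiDist_eq_re_trace_sub_add_sum hA.1 hB, add_eq_left, Finset.sum_eq_zero_iff_of_nonneg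
    fun j _ => Finset.sum_nonneg fun k _ => hnonneg j k] at h
  refine eq_of_eigenvalues_eq_of_eigenOverlap_ne_zero hA.1 hB.1 fun j k hjk => ?_
  have hterm := (Finset.sum_eq_zero_iff_of_nonneg fun k _ => hnonneg j k).1
    (h j (Finset.mem_univ j)) k (Finset.mem_univ k)
  have hpos := hB.eigenvalues_pos k
  have hkl := (mul_eq_zero_iff_left hpos.ne').1 ((mul_eq_zero_iff_right hjk).1 hterm)
  rwa [klFun_eq_zero_iff (div_nonneg (hA.eigenvalues_nonneg j) hpos.le),
    div_eq_one_iff_eq hpos.ne'] at hkl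

end Klein

section TracePositivity

variable {m 𝕜 : Type*} [Fintype m] [RCLike 𝕜] {A B : Matrix m m 𝕜}

theorem trace_conjTranspose_mul_mul_pos (hA : A.PosDef) (hB : B ≠ 0) :
    0 < trace (Bᴴ * A * B) := by
  have hpsd := hA.posSemidef.conjTranspose_mul_mul_same B
  refine hpsd.trace_nonneg.lt_of_ne' fun htrace => hB ?_
  have hzero : Bᴴ * A * B = 0 := hpsd.trace_eq_zero_iff.1 htrace
  have hmulVec : ∀ x, B *ᵥ x = 0 := fun x => by
    by_contra hx
    have hform : star (B *ᵥ x) ⬝ᵥ A *ᵥ (B *ᵥ x) = star x ⬝ᵥ (Bᴴ * A * B) *ᵥ x := by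
      simp only [star_mulVec, ← dotProduct_mulVec, mulVec_mulVec, Matrix.mul_assoc]
    exact (hA.dotProduct_mulVec_pos hx).ne' (by rw [hform, hzero, zero_mulVec, dotProduct_zero])
  classical exact ext_of_mulVec_single fun j => by rw [hmulVec, zero_mulVec]

theorem re_trace_mul_pos_of_isStarProjection (hA : A.PosDef) (hB : IsStarProjection B)
    (hB0 : B ≠ 0) : 0 < RCLike.re (trace (A * B)) := by
  have htrace : trace (Bᴴ * A * B) = trace (A * B) := by
    rw [← star_eq_conjTranspose, hB.isSelfAdjoint.star_eq, Matrix.mul_assoc, trace_mul_comm,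
      Matrix.mul_assoc, hB.isIdempotentElem.eq]
  exact (RCLike.pos_iff.1 (htrace ▸ trace_conjTranspose_mul_mul_pos hA hB0)).1

end TracePositivity

section Logarithm

theorem cfc_log_mul_of_commute {A : Type*} [NormedRing A] [StarRing A] [NormedAlgebra ℝ A]
    [CompleteSpace A] [ContinuousFunctionalCalculus ℝ A IsSelfAdjoint] [PartialOrder A]
    [StarOrderedRing A] [NonnegSpectrumClass ℝ A] {a b : A} (hab : Commute a b)
    (ha : IsStrictlyPositive a) (hb : IsStrictlyPositive b) :
    CFC.log (a * b) = CFC.log a + CFC.log b := by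
  let : NormedAlgebra ℚ A := .restrictScalars ℚ ℝ A
  have hlog : Commute (CFC.log a) (CFC.log b) :=
    ((hab.cfc_real Real.log).symm.cfc_real Real.log).symm
  rw [← CFC.log_exp (CFC.log a + CFC.log b) (IsSelfAdjoint.log.add IsSelfAdjoint.log),
    NormedSpace.exp_add_of_commute hlog, CFC.exp_log a, CFC.exp_log b]

open scoped MatrixOrder Matrix.Norms.L2Operator in
theorem matrix_cfc_log_mul_of_commute {m 𝕜 : Type*} [Fintype m] [DecidableEq m] [RCLike 𝕜]
    {A B : Matrix m m 𝕜} (hAB : Commute A B) (hA : A.PosDef) (hB : B.PosDef) :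
    cfc Real.log (A * B) = cfc Real.log A + cfc Real.log B :=
  let : NormedAlgebra ℝ (Matrix m m 𝕜) :=
    -- the real scalar action of `.restrictScalars ℝ 𝕜` does not unify with that of the matrix `cfc`
    { norm_smul_le := fun r X => by simpa using norm_smul_le (r : 𝕜) X }
  cfc_log_mul_of_commute hAB hA.isStrictlyPositive hB.isStrictlyPositive

end Logarithm

section WeightedPinching

variable {ι S R : Type*} [Fintype ι] [CommSemiring S] [Semiring R] [Algebra S R] {P : ι → R}

/-- The map `x ↦ ∑ i, c i • P i x P i`. For mutually orthogonal projections `P i` summing to `1`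
and all weights equal to `1` it is the pinching (conditional expectation) onto their commutant. -/
def weightedPinching (P : ι → R) (c : ι → S) (x : R) : R :=
  ∑ i, c i • (P i * x * P i)

theorem weightedPinching_mul_apply (hP : OrthogonalIdempotents P) (c : ι → S) (x : R) (j : ι) :
    weightedPinching P c x * P j = c j • (P j * x * P j) := by
  classical
  simp only [weightedPinching, Finset.sum_mul, smul_mul_assoc, mul_assoc, hP.mul_eq, mul_ite,
    mul_zero, smul_ite, smul_zero, Finset.sum_ite_eq', Finset.mem_univ, if_true]

theorem apply_mul_weightedPinching (hP : OrthogonalIdempotents P) (c : ι → S) (x : R) (j : ι) :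
    P j * weightedPinching P c x = c j • (P j * x * P j) := by
  classical
  simp only [weightedPinching, Finset.mul_sum, mul_smul_comm, ← mul_assoc, hP.mul_eq, ite_mul,
    zero_mul, smul_ite, smul_zero, Finset.sum_ite_eq, Finset.mem_univ, if_true]

theorem commute_weightedPinching (hP : OrthogonalIdempotents P) (c : ι → S) (x : R) (j : ι) :
    Commute (weightedPinching P c x) (P j) := by
  rw [commute_iff_eq, weightedPinching_mul_apply hP, apply_mul_weightedPinching hP]

theorem weightedPinching_weightedPinching (hP : OrthogonalIdempotents P) (a b : ι → S) (x : R) :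
    weightedPinching P a (weightedPinching P b x) = weightedPinching P (a * b) x := by
  refine Finset.sum_congr rfl fun i _ => ?_
  rw [apply_mul_weightedPinching hP, smul_mul_assoc, mul_assoc _ (P i), (hP.idem i).eq, smul_smul,
    Pi.mul_apply]

theorem weightedPinching_eq_mul_of_commute (c : ι → S) {x : R} (hx : ∀ i, Commute x (P i)) :
    weightedPinching P c x = weightedPinching P c 1 * x := by
  simp only [weightedPinching, Finset.sum_mul, smul_mul_assoc, mul_one]
  refine Finset.sum_congr rfl fun i _ => ?_
  rw [mul_assoc, mul_assoc, (hx i).eq]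

theorem weightedPinching_one_of_commute (hP : CompleteOrthogonalIdempotents P) {x : R}
    (hx : ∀ i, Commute x (P i)) : weightedPinching P (1 : ι → S) x = x := by
  rw [weightedPinching_eq_mul_of_commute _ hx]
  simp only [weightedPinching, Pi.one_apply, one_smul, mul_one, (hP.idem _).eq, hP.complete,
    one_mul]

theorem weightedPinching_one_eq_weightedPinching_inv_iff {F : Type*} [Semifield F] [Algebra F R]
    (hP : CompleteOrthogonalIdempotents P) {c : ι → F} (hc : ∀ i, c i ≠ 0) {x y : R}
    (hx : ∀ i, Commute x (P i)) :
    weightedPinching P (1 : ι → F) y = weightedPinching P c⁻¹ x ↔ x = weightedPinching P c y := by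
  have hcc : c * c⁻¹ = 1 := funext fun i => mul_inv_cancel₀ (hc i)
  refine ⟨fun h => ?_, fun h => ?_⟩
  · calc x = weightedPinching P (c * c⁻¹) x := by rw [hcc, weightedPinching_one_of_commute hP hx]
      _ = weightedPinching P c (weightedPinching P 1 y) := by
        rw [h, weightedPinching_weightedPinching hP.1]
      _ = weightedPinching P c y := by rw [weightedPinching_weightedPinching hP.1, mul_one]
  · rw [h, weightedPinching_weightedPinching hP.1, mul_comm, hcc]

end WeightedPinching

section MatrixPinching

variable {m 𝕜 : Type*} [Fintype m] [DecidableEq m] [RCLike 𝕜]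
  {ι : Type*} [Fintype ι] {P : ι → Matrix m m 𝕜} {c : ι → ℝ} {ψ φ : Matrix m m 𝕜}

theorem posDef_sum_conjTranspose_mul_mul {A : ι → Matrix m m 𝕜} (hA : ∀ i, (A i).PosDef)
    (hP : ∑ i, P i = 1) : (∑ i, (P i)ᴴ * A i * P i).PosDef := by
  refine .of_dotProduct_mulVec_pos ?_ fun x hx => ?_
  · exact (posSemidef_sum _ fun i _ => (hA i).posSemidef.conjTranspose_mul_mul_same (P i)).1
  obtain ⟨i, hi⟩ : ∃ i, P i *ᵥ x ≠ 0 := by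
    by_contra! h
    exact hx (by rw [← one_mulVec x, ← hP, sum_mulVec]; exact Finset.sum_eq_zero fun i _ => h i)
  have hform : star x ⬝ᵥ (∑ i, (P i)ᴴ * A i * P i) *ᵥ x =
      ∑ i, star (P i *ᵥ x) ⬝ᵥ A i *ᵥ (P i *ᵥ x) := by
    simp only [sum_mulVec, dotProduct_sum, star_mulVec, ← dotProduct_mulVec, mulVec_mulVec,
      Matrix.mul_assoc]
  rw [hform]
  exact Finset.sum_pos' (fun i _ => (hA i).posSemidef.dotProduct_mulVec_nonneg _)
    ⟨i, Finset.mem_univ i, (hA i).dotProduct_mulVec_pos hi⟩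

theorem posDef_weightedPinching (hP : ∑ i, P i = 1) (hPsa : ∀ i, (P i).IsHermitian)
    (hc : ∀ i, 0 < c i) (hψ : ψ.PosDef) : (weightedPinching P c ψ).PosDef := by
  convert posDef_sum_conjTranspose_mul_mul (fun i => hψ.smul (hc i)) hP using 1
  refine Finset.sum_congr rfl fun i _ => ?_
  rw [(hPsa i).eq, mul_smul_comm, smul_mul_assoc]

theorem trace_weightedPinching_mul (P : ι → Matrix m m 𝕜) (c : ι → ℝ) (A B : Matrix m m 𝕜) :
    trace (weightedPinching P c A * B) = trace (A * weightedPinching P c B) := by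
  simp only [weightedPinching, Finset.sum_mul, Finset.mul_sum, trace_sum, smul_mul_assoc,
    mul_smul_comm, trace_smul]
  refine Finset.sum_congr rfl fun i _ => congrArg (c i • ·) ?_
  rw [Matrix.mul_assoc, Matrix.mul_assoc, trace_mul_comm]
  simp only [Matrix.mul_assoc]

theorem trace_weightedPinching_mul_apply (hP : OrthogonalIdempotents P) (c : ι → ℝ)
    (A : Matrix m m 𝕜) (j : ι) :
    trace (weightedPinching P c A * P j) = c j • trace (A * P j) := by
  rw [weightedPinching_mul_apply hP, trace_smul, Matrix.mul_assoc, trace_mul_comm, Matrix.mul_assoc,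
    (hP.idem j).eq]

theorem trace_eq_sum_trace_mul (hP : ∑ i, P i = 1) (A : Matrix m m 𝕜) :
    trace A = ∑ i, trace (A * P i) := by
  rw [← trace_sum, ← Finset.mul_sum, hP, Matrix.mul_one]

theorem cfc_log_weightedPinching_of_commute (hP : CompleteOrthogonalIdempotents P)
    (hPsa : ∀ i, (P i).IsHermitian) (hc : ∀ i, 0 < c i) (hψ : ψ.PosDef)
    (hψP : ∀ i, Commute ψ (P i)) :
    cfc Real.log (weightedPinching P c ψ) =
      cfc Real.log (weightedPinching P c 1) + cfc Real.log ψ := by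
  rw [weightedPinching_eq_mul_of_commute c hψP]
  have hcomm : Commute (weightedPinching P c 1) ψ := Commute.sum_left _ _ _ fun i _ =>
    ((((hψP i).symm.mul_left (.one_left ψ)).mul_left (hψP i).symm).smul_left (c i))
  exact matrix_cfc_log_mul_of_commute hcomm
    (posDef_weightedPinching hP.complete hPsa hc .one) hψ

theorem umegakiDist_eq_add_of_commute (hP : CompleteOrthogonalIdempotents P)
    (hPsa : ∀ i, (P i).IsHermitian) (hc : ∀ i, 0 < c i) (hψ : ψ.PosDef) (hφ : φ.PosDef)
    (hφP : ∀ i, Commute φ (P i)) :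
    umegakiDist φ ψ = umegakiDist (weightedPinching P c ψ) ψ +
      umegakiDist (weightedPinching P c⁻¹ φ) (weightedPinching P (1 : ι → ℝ) ψ) := by
  set ρ := weightedPinching P c ψ
  have hρ : ρ.PosDef := posDef_weightedPinching hP.complete hPsa hc hψ
  have hρP : ∀ i, Commute ρ (P i) := commute_weightedPinching hP.1 c ψ
  have hcinv : ∀ i, 0 < c⁻¹ i := fun i => inv_pos.2 (hc i)
  have hρψ : weightedPinching P c⁻¹ ρ = weightedPinching P (1 : ι → ℝ) ψ := by
    rw [weightedPinching_weightedPinching hP.1]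
    congr 1
    exact funext fun i => inv_mul_cancel₀ (hc i).ne'
  have hlog : cfc Real.log (weightedPinching P (1 : ι → ℝ) ψ) -
      cfc Real.log (weightedPinching P c⁻¹ φ) = cfc Real.log ρ - cfc Real.log φ := by
    rw [← hρψ, cfc_log_weightedPinching_of_commute hP hPsa hcinv hρ hρP,
      cfc_log_weightedPinching_of_commute hP hPsa hcinv hφ hφP, add_sub_add_left_eq_sub]
  have hcomm : ∀ i, Commute (cfc Real.log ρ - cfc Real.log φ) (P i) := fun i =>
    ((hρP i).cfc_real Real.log).sub_left ((hφP i).cfc_real Real.log)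
  have hpinch : umegakiDist (weightedPinching P c⁻¹ φ) (weightedPinching P (1 : ι → ℝ) ψ) =
      RCLike.re (trace (ψ * (cfc Real.log ρ - cfc Real.log φ))) := by
    rw [umegakiDist, hlog, trace_weightedPinching_mul, weightedPinching_one_of_commute hP hcomm]
  rw [hpinch]
  simp only [umegakiDist, Matrix.mul_sub, trace_sub, map_sub]
  ring

theorem re_trace_weightedPinching_inv (hP : CompleteOrthogonalIdempotents P)
    (hc : ∀ i, c i ≠ 0)
    (hφc : ∀ i, RCLike.re (trace (φ * P i)) = c i * RCLike.re (trace (ψ * P i))) :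
    RCLike.re (trace (weightedPinching P c⁻¹ φ)) =
      RCLike.re (trace (weightedPinching P (1 : ι → ℝ) ψ)) := by
  rw [trace_eq_sum_trace_mul hP.complete (weightedPinching P c⁻¹ φ),
    trace_eq_sum_trace_mul hP.complete (weightedPinching P 1 ψ), map_sum, map_sum]
  refine Finset.sum_congr rfl fun i _ => ?_
  rw [trace_weightedPinching_mul_apply hP.1, trace_weightedPinching_mul_apply hP.1, RCLike.smul_re,
    hφc, Pi.inv_apply, inv_mul_cancel_left₀ (hc i), Pi.one_apply, one_smul]

theorem umegakiDist_weightedPinching_le (hP : CompleteOrthogonalIdempotents P)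
    (hPsa : ∀ i, (P i).IsHermitian) (hc : ∀ i, 0 < c i) (hψ : ψ.PosDef) (hφ : φ.PosDef)
    (hφP : ∀ i, Commute φ (P i))
    (hφc : ∀ i, RCLike.re (trace (φ * P i)) = c i * RCLike.re (trace (ψ * P i))) :
    umegakiDist (weightedPinching P c ψ) ψ ≤ umegakiDist φ ψ := by
  have hA := posDef_weightedPinching (c := 1) hP.complete hPsa (fun _ => one_pos) hψ
  have hB := posDef_weightedPinching (c := c⁻¹) hP.complete hPsa (fun i => inv_pos.2 (hc i)) hφ
  have hklein := re_trace_sub_re_trace_le_umegakiDist hA.posSemidef hB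
  rw [re_trace_weightedPinching_inv hP (fun i => (hc i).ne') hφc, sub_self] at hklein
  rw [umegakiDist_eq_add_of_commute hP hPsa hc hψ hφ hφP]
  exact le_add_of_nonneg_right hklein

theorem umegakiDist_eq_umegakiDist_weightedPinching_iff (hP : CompleteOrthogonalIdempotents P)
    (hPsa : ∀ i, (P i).IsHermitian) (hc : ∀ i, 0 < c i) (hψ : ψ.PosDef) (hφ : φ.PosDef)
    (hφP : ∀ i, Commute φ (P i))
    (hφc : ∀ i, RCLike.re (trace (φ * P i)) = c i * RCLike.re (trace (ψ * P i))) :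
    umegakiDist φ ψ = umegakiDist (weightedPinching P c ψ) ψ ↔ φ = weightedPinching P c ψ := by
  have hA := posDef_weightedPinching (c := 1) hP.complete hPsa (fun _ => one_pos) hψ
  have hB := posDef_weightedPinching (c := c⁻¹) hP.complete hPsa (fun i => inv_pos.2 (hc i)) hφ
  have hklein := umegakiDist_eq_re_trace_sub_re_trace_iff hA.posSemidef hB
  rw [re_trace_weightedPinching_inv hP (fun i => (hc i).ne') hφc, sub_self] at hklein
  rw [umegakiDist_eq_add_of_commute hP hPsa hc hψ hφ hφP, add_eq_left, hklein,
    weightedPinching_one_eq_weightedPinching_inv_iff hP (fun i => (hc i).ne') hφP]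

end MatrixPinching

section Jeffrey

variable {m 𝕜 : Type*} [Fintype m] [DecidableEq m] [RCLike 𝕜]
  {ι : Type*} {P : ι → Matrix m m 𝕜} {l : ι → ℝ} {ψ φ : Matrix m m 𝕜}

/-- The block-diagonal positive definite matrices whose `i`-th block has trace `l i`. The total
trace `∑ i, l i` is not normalised. -/
def jeffreyStates (P : ι → Matrix m m 𝕜) (l : ι → ℝ) : Set (Matrix m m 𝕜) :=
  {ω | ω.PosDef ∧ (∀ i, Commute ω (P i)) ∧ ∀ i, RCLike.re (trace (ω * P i)) = l i}

theorem mem_jeffreyStates_iff_trace_eq [Fintype ι] (hP : ∑ i, P i = 1) :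
    φ ∈ jeffreyStates P l ↔ φ.PosDef ∧ trace φ = ((∑ i, l i : ℝ) : 𝕜) ∧
      (∀ i, Commute φ (P i)) ∧ ∀ i, RCLike.re (trace (φ * P i)) = l i := by
  refine ⟨fun ⟨hφ, hφP, hφl⟩ => ⟨hφ, ?_, hφP, hφl⟩, fun ⟨hφ, _, hφP, hφl⟩ => ⟨hφ, hφP, hφl⟩⟩
  have hreal : star (trace φ) = trace φ := by rw [← trace_conjTranspose, hφ.1.eq]
  rw [← RCLike.conj_eq_iff_re.1 hreal, trace_eq_sum_trace_mul hP, map_sum]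
  simp only [hφl]

variable [Fintype ι]

/-- Jeffrey's update of `ψ`: the pinching of `ψ` by `P`, its `i`-th block rescaled to have
trace `l i`. -/
noncomputable def jeffreyUpdate (P : ι → Matrix m m 𝕜) (l : ι → ℝ) (ψ : Matrix m m 𝕜) :
    Matrix m m 𝕜 :=
  weightedPinching P (fun i => l i / RCLike.re (trace (ψ * P i))) ψ

theorem jeffreyUpdate_mem_jeffreyStates (hP : CompleteOrthogonalIdempotents P)
    (hPsa : ∀ i, (P i).IsHermitian) (hψ : ψ.PosDef) (hl : ∀ i, 0 < l i)
    (hψP : ∀ i, 0 < RCLike.re (trace (ψ * P i))) :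
    jeffreyUpdate P l ψ ∈ jeffreyStates P l := by
  refine ⟨posDef_weightedPinching hP.complete hPsa (fun i => div_pos (hl i) (hψP i)) hψ,
    commute_weightedPinching hP.1 _ ψ, fun i => ?_⟩
  rw [jeffreyUpdate, trace_weightedPinching_mul_apply hP.1, RCLike.smul_re,
    div_mul_cancel₀ _ (hψP i).ne']

theorem quantum_jeffrey_entropic_projection_general (hP : CompleteOrthogonalIdempotents P)
    (hPsa : ∀ i, (P i).IsHermitian) (hP0 : ∀ i, P i ≠ 0) (hψ : ψ.PosDef) (hl : ∀ i, 0 < l i) :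
    jeffreyUpdate P l ψ ∈ jeffreyStates P l ∧ ∀ φ ∈ jeffreyStates P l,
      umegakiDist (jeffreyUpdate P l ψ) ψ ≤ umegakiDist φ ψ ∧
        (umegakiDist φ ψ = umegakiDist (jeffreyUpdate P l ψ) ψ ↔ φ = jeffreyUpdate P l ψ) := by
  have hψP : ∀ i, 0 < RCLike.re (trace (ψ * P i)) := fun i =>
    re_trace_mul_pos_of_isStarProjection hψ ⟨hP.idem i, hPsa i⟩ (hP0 i)
  have hc : ∀ i, 0 < l i / RCLike.re (trace (ψ * P i)) := fun i => div_pos (hl i) (hψP i)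
  refine ⟨jeffreyUpdate_mem_jeffreyStates hP hPsa hψ hl hψP, fun φ ⟨hφ, hφP, hφl⟩ => ?_⟩
  have hφc : ∀ i, RCLike.re (trace (φ * P i)) =
      l i / RCLike.re (trace (ψ * P i)) * RCLike.re (trace (ψ * P i)) := fun i => by
    rw [hφl, div_mul_cancel₀ _ (hψP i).ne']
  exact ⟨umegakiDist_weightedPinching_le hP hPsa hc hψ hφ hφP hφc,
    umegakiDist_eq_umegakiDist_weightedPinching_iff hP hPsa hc hψ hφ hφP hφc⟩

end Jeffrey

/-- Quantum Jeffrey'\''s rule as entropic projection: for nonzero mutually orthogonal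
projections `P 1, …, P n` summing to `1`, a positive definite density matrix `ψ`, and weights
`l i > 0` with `∑ i, l i = 1`, the state `ρ := ∑ i, (l i / Re tr(ψ P i)) • (P i ψ P i)` belongs
to `Q = {ω | ω positive definite density matrix, ω commutes with every P i, Re tr(ω P i) = l i}`
and is the unique minimiser of `D₀(·, ψ)` on `Q`. -/
theorem quantum_jeffrey_entropic_projection {d n : ℕ} (hd : 1 ≤ d)
    (P : Fin n → Matrix (Fin d) (Fin d) ℂ)
    (hPne : ∀ i, P i ≠ 0)
    (hPH : ∀ i, (P i)ᴴ = P i)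
    (horth : ∀ i j, P i * P j = if i = j then P i else 0)
    (hsum : ∑ i, P i = 1)
    (ψ : Matrix (Fin d) (Fin d) ℂ) (hψ : ψ.PosDef) (hψ1 : ψ.trace = 1)
    (l : Fin n → ℝ) (hl : ∀ i, 0 < l i) (hl1 : ∑ i, l i = 1)
    (Q : Set (Matrix (Fin d) (Fin d) ℂ))
    (hQ : Q = {ω | ω.PosDef ∧ ω.trace = 1 ∧ (∀ i, ω * P i = P i * ω) ∧
      ∀ i, (Matrix.trace (ω * P i)).re = l i}) :
    (∑ i, (l i / (Matrix.trace (ψ * P i)).re) • (P i * ψ * P i)) ∈ Q ∧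
      ∀ φ ∈ Q,
        umegakiD0 (∑ i, (l i / (Matrix.trace (ψ * P i)).re) • (P i * ψ * P i)) ψ ≤
            umegakiD0 φ ψ ∧
          (umegakiD0 φ ψ =
              umegakiD0 (∑ i, (l i / (Matrix.trace (ψ * P i)).re) • (P i * ψ * P i)) ψ ↔
            φ = ∑ i, (l i / (Matrix.trace (ψ * P i)).re) • (P i * ψ * P i)) := by
  have hP : CompleteOrthogonalIdempotents P := ⟨OrthogonalIdempotents.iff_mul_eq.2 horth, hsum⟩
  have hQ' : Q = jeffreyStates P l := hQ.trans <| Set.ext fun ω =>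
    (by rw [mem_jeffreyStates_iff_trace_eq hsum, hl1, RCLike.ofReal_one]; rfl)
  subst hQ'
  exact quantum_jeffrey_entropic_projection_general hP hPH hPne hψ hl
end
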